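/- Fix the number of agents n ≥ 1 and consider the FI model with the lexicographic scoring vector s_i = 2^{m-i}. For m items and a vector k of nonnegative integers summing to m, let EU^k(a) denote the expected utility of agent a under the non-interleaving picking sequence k, and let K*_m be the set of vectors k maximizing min_a EU^k(a). Then for every ε > 0 there exists M such that for all m ≥ M and ALL k ∈ K*_m, ( max_a EU^k(a) - min_a EU^k(a) ) / ( Σ_a EU^k(a) ) < ε. -/

import Mathlib

/-- The `k` most preferred items of `S` under the ranking `σ` (where `σ r` is the item of
0-based rank `r`, so `σ.symm x` is the rank of item `x`): the items of `S` having fewer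
than `k` strictly better items inside `S`. -/
def topk {m : ℕ} (σ : Fin m ≃ Fin m) (S : Finset (Fin m)) (k : ℕ) : Finset (Fin m) :=
  S.filter fun x => (S.filter fun y => σ.symm y < σ.symm x).card < k

/-- Items remaining before the `i`-th agent (0-based) picks, under profile `P` (agent `i`
has ranking `P i`) and pick-count vector `k` (agent `i` picks `k i` items). -/
def remaining {m : ℕ} (P : ℕ → Fin m ≃ Fin m) (k : ℕ → ℕ) : ℕ → Finset (Fin m)
  | 0 => Finset.univ
  | i + 1 => remaining P k i \ topk (P i) (remaining P k i) (k i)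

/-- The set of items greedily picked by the `i`-th agent (0-based). -/
def alloc {m : ℕ} (P : ℕ → Fin m ≃ Fin m) (k : ℕ → ℕ) (i : ℕ) : Finset (Fin m) :=
  topk (P i) (remaining P k i) (k i)

/-- The utility of the `i`-th agent (0-based): the sum of the scores `s r` over the
1-based ranks `r` (in her own ranking) of the items she receives. -/
noncomputable def util {m : ℕ} (s : ℕ → ℝ) (P : ℕ → Fin m ≃ Fin m) (k : ℕ → ℕ)
    (i : ℕ) : ℝ :=
  ∑ x ∈ alloc P k i, s (((P i).symm x : ℕ) + 1)

/-- Extend a profile on `Fin n` to a profile indexed by `ℕ` (agents `≥ n` are irrelevant). -/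
def extendProfile {m : ℕ} (n : ℕ) (Q : Fin n → Fin m ≃ Fin m) : ℕ → Fin m ≃ Fin m :=
  fun i => if h : i < n then Q ⟨i, h⟩ else Equiv.refl _

/-- Expected utility of the `i`-th agent (0-based) in the full independence model. -/
noncomputable def EUFI (n m : ℕ) (s : ℕ → ℝ) (k : ℕ → ℕ) (i : ℕ) : ℝ :=
  (∑ Q : Fin n → Fin m ≃ Fin m, util s (extendProfile n Q) k i) /
    (Fintype.card (Fin n → Fin m ≃ Fin m) : ℝ)

/-- The lexicographic scoring vector for `m` items: `s_j = 2^(m-j)`. -/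
noncomputable def lexScore (m : ℕ) : ℕ → ℝ := fun j => (2 : ℝ) ^ (m - j)

theorem card_topk_le {m : ℕ} (σ : Fin m ≃ Fin m) (S : Finset (Fin m)) (k : ℕ) :
    (topk σ S k).card ≤ k := by
  have hmono : ∀ x ∈ S, ∀ y, σ.symm x < σ.symm y →
      (S.filter fun z => σ.symm z < σ.symm x).card <
        (S.filter fun z => σ.symm z < σ.symm y).card := by
    intro x hx y hxy
    apply Finset.card_lt_card
    rw [Finset.ssubset_iff_of_subset]
    · exact ⟨x, by simp [hx, hxy], by simp⟩
    · intro z hz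
      simp only [Finset.mem_filter] at hz ⊢
      exact ⟨hz.1, hz.2.trans hxy⟩
  have h := Finset.card_le_card_of_injOn (s := topk σ S k) (t := Finset.range k)
    (fun x => (S.filter fun y => σ.symm y < σ.symm x).card)
    (by
      intro x hx
      simpa using (Finset.mem_filter.mp hx).2)
    (by
      intro x hx y hy hxy
      have hxS := (Finset.mem_filter.mp hx).1
      have hyS := (Finset.mem_filter.mp hy).1
      rcases lt_trichotomy (σ.symm x) (σ.symm y) with h | h | h
      · exact absurd hxy (hmono x hxS y h).ne
      · exact σ.symm.injective h
      · exact absurd hxy (hmono y hyS x h).ne')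
  simpa using h

/-- An item of rank below `k` that is still available is among the `k` best available ones. -/
theorem mem_topk_of_rank_lt {m : ℕ} (σ : Fin m ≃ Fin m) (S : Finset (Fin m)) {k : ℕ}
    {r : Fin m} (hr : (r : ℕ) < k) (hS : σ r ∈ S) : σ r ∈ topk σ S k := by
  refine Finset.mem_filter.mpr ⟨hS, lt_of_le_of_lt ?_ hr⟩
  have h := Finset.card_le_card_of_injOn (s := S.filter fun y => σ.symm y < σ.symm (σ r))
    (t := Finset.Iio r) σ.symm
    (by
      intro y hy
      simpa using (Finset.mem_filter.mp hy).2)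
    σ.symm.injective.injOn
  simpa using h

theorem le_card_remaining {m : ℕ} (P : ℕ → Fin m ≃ Fin m) (k : ℕ → ℕ) (i : ℕ) :
    m ≤ (remaining P k i).card + ∑ j ∈ Finset.range i, k j := by
  induction i with
  | zero => simp [remaining]
  | succ i ih =>
    have hsub : topk (P i) (remaining P k i) (k i) ⊆ remaining P k i := Finset.filter_subset _ _
    have hcard := Finset.card_sdiff_add_card_eq_card hsub
    have htop := card_topk_le (P i) (remaining P k i) (k i)
    rw [Finset.sum_range_succ, remaining]
    omega

theorem remaining_congr {m : ℕ} {P P' : ℕ → Fin m ≃ Fin m} (k : ℕ → ℕ) (i : ℕ)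
    (h : ∀ j < i, P j = P' j) : remaining P k i = remaining P' k i := by
  induction i with
  | zero => rfl
  | succ i ih =>
    rw [remaining, remaining, ih fun j hj => h j (hj.trans i.lt_succ_self),
      h i i.lt_succ_self]

theorem util_eq_sum_ranks {m : ℕ} (s : ℕ → ℝ) (P : ℕ → Fin m ≃ Fin m) (k : ℕ → ℕ) (i : ℕ) :
    util s P k i = ∑ r : Fin m, if P i r ∈ alloc P k i then s ((r : ℕ) + 1) else 0 := by
  rw [← Equiv.sum_comp (P i).symm, util]
  simp [Finset.sum_ite_mem]

theorem sum_lexScore {m L : ℕ} (h : L ≤ m) :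
    ∑ r ∈ Finset.range L, lexScore m (r + 1) = 2 ^ m - 2 ^ (m - L) := by
  induction L with
  | zero => simp
  | succ L ih =>
    rw [Finset.sum_range_succ, ih (by omega), lexScore]
    have : m - L = m - (L + 1) + 1 := by omega
    rw [this, pow_succ]
    ring

theorem lexScore_nonneg (m j : ℕ) : 0 ≤ lexScore m j := by
  unfold lexScore
  positivity

theorem util_lexScore_le {m : ℕ} (P : ℕ → Fin m ≃ Fin m) (k : ℕ → ℕ) (i : ℕ) :
    util (lexScore m) P k i ≤ 2 ^ m := by
  rw [util_eq_sum_ranks]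
  calc _ ≤ ∑ r : Fin m, lexScore m ((r : ℕ) + 1) := by
        refine Finset.sum_le_sum fun r _ => ?_
        split_ifs
        exacts [le_rfl, lexScore_nonneg _ _]
    _ = 2 ^ m - 2 ^ (m - m) := by
        rw [Fin.sum_univ_eq_sum_range fun r => lexScore m (r + 1), sum_lexScore le_rfl]
    _ ≤ 2 ^ m := by simp

/-- An agent with at least `L` picks receives every available item of rank below `L`. -/
theorem le_util {m : ℕ} {s : ℕ → ℝ} (hs : ∀ j, 0 ≤ s j) (P : ℕ → Fin m ≃ Fin m) (k : ℕ → ℕ)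
    {i L : ℕ} (hL : L ≤ k i) :
    ∑ r : Fin m, (if (r : ℕ) < L then s ((r : ℕ) + 1) else 0) *
      (if P i r ∈ remaining P k i then 1 else 0) ≤ util s P k i := by
  rw [util_eq_sum_ranks]
  refine Finset.sum_le_sum fun r _ => ?_
  by_cases hr : (r : ℕ) < L
  · by_cases hR : P i r ∈ remaining P k i
    · have : P i r ∈ alloc P k i := mem_topk_of_rank_lt _ _ (hr.trans_le hL) hR
      simp [hr, hR, this]
    · simp only [hR, if_false, mul_zero]
      split_ifs
      exacts [hs _, le_rfl]
  · simp only [hr, if_false, zero_mul]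
    split_ifs
    exacts [hs _, le_rfl]

/-- Composes the ranking of agent `i` with a relabelling of the items. -/
def relabelAgent {n m : ℕ} (i : Fin n) (τ : Fin m ≃ Fin m) :
    (Fin n → Fin m ≃ Fin m) ≃ (Fin n → Fin m ≃ Fin m) where
  toFun Q := Function.update Q i ((Q i).trans τ)
  invFun Q := Function.update Q i ((Q i).trans τ.symm)
  left_inv Q := by ext; simp [Equiv.trans_assoc]
  right_inv Q := by ext; simp [Equiv.trans_assoc]

/-- Summed over all profiles, the item of rank `r` of agent `i` is available to her with
frequency equal to the proportion of available items. -/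
theorem mul_sum_available {n m : ℕ} [NeZero m] (k : ℕ → ℕ) (i : Fin n) (r : Fin m) :
    (m : ℝ) * ∑ Q : Fin n → Fin m ≃ Fin m,
      (if extendProfile n Q i r ∈ remaining (extendProfile n Q) k i then (1 : ℝ) else 0) =
    ∑ Q : Fin n → Fin m ≃ Fin m, ((remaining (extendProfile n Q) k i).card : ℝ) := by
  have hshift : ∀ t : Fin m, ∑ Q : Fin n → Fin m ≃ Fin m,
      (if extendProfile n Q i r ∈ remaining (extendProfile n Q) k i then (1 : ℝ) else 0) =
      ∑ Q : Fin n → Fin m ≃ Fin m,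
        (if Q i r + t ∈ remaining (extendProfile n Q) k i then (1 : ℝ) else 0) := by
    intro t
    rw [← Equiv.sum_comp (relabelAgent i (Equiv.addRight t))]
    refine Finset.sum_congr rfl fun Q _ => ?_
    have hrem : remaining (extendProfile n (relabelAgent i (Equiv.addRight t) Q)) k i =
        remaining (extendProfile n Q) k i := by
      refine remaining_congr k i fun j hj => ?_
      have hjn : j < n := hj.trans i.isLt
      have hne : (⟨j, hjn⟩ : Fin n) ≠ i := fun h => hj.ne (congrArg Fin.val h)
      simp [extendProfile, hjn, relabelAgent, hne]
    rw [hrem]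
    simp [extendProfile, relabelAgent]
  calc _ = ∑ t : Fin m, ∑ Q : Fin n → Fin m ≃ Fin m,
        (if Q i r + t ∈ remaining (extendProfile n Q) k i then (1 : ℝ) else 0) := by
        rw [← Finset.sum_congr rfl fun t _ => hshift t]
        simp
    _ = _ := by
        rw [Finset.sum_comm]
        refine Finset.sum_congr rfl fun Q _ => ?_
        refine (Equiv.sum_comp (Equiv.addLeft (Q i r)) fun x =>
          if x ∈ remaining (extendProfile n Q) k i then (1 : ℝ) else 0).trans ?_
        simp

theorem EUFI_lexScore_le (n m : ℕ) (k : ℕ → ℕ) (i : ℕ) :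
    EUFI n m (lexScore m) k i ≤ 2 ^ m := by
  rw [EUFI, div_le_iff₀ (by exact_mod_cast Fintype.card_pos)]
  refine (Finset.sum_le_card_nsmul _ _ _ fun Q _ => util_lexScore_le _ k i).trans_eq ?_
  rw [nsmul_eq_mul, mul_comm, Finset.card_univ]

theorem le_EUFI {n m L : ℕ} (hm : 0 < m) (hLm : L ≤ m) (k : ℕ → ℕ) (i : Fin n)
    (hL : L ≤ k i) :
    (2 ^ m - 2 ^ (m - L) : ℝ) * (1 - (∑ j ∈ Finset.range i, k j : ℕ) / m) ≤
      EUFI n m (lexScore m) k i := by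
  have : NeZero m := ⟨hm.ne'⟩
  have hm' : (0 : ℝ) < m := by exact_mod_cast hm
  set N : ℝ := (Fintype.card (Fin n → Fin m ≃ Fin m) : ℝ) with hN
  set D : ℝ := ((∑ j ∈ Finset.range i, k j : ℕ) : ℝ) with hD
  have hNpos : 0 < N := by rw [hN]; exact_mod_cast Fintype.card_pos
  have havail : ∀ r : Fin m, (1 - D / m) * N ≤ ∑ Q : Fin n → Fin m ≃ Fin m,
      (if extendProfile n Q i r ∈ remaining (extendProfile n Q) k i then (1 : ℝ) else 0) := by
    intro r
    have hcard : N * (m - D) ≤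
        ∑ Q : Fin n → Fin m ≃ Fin m, ((remaining (extendProfile n Q) k i).card : ℝ) := by
      have := Finset.card_nsmul_le_sum (Finset.univ : Finset (Fin n → Fin m ≃ Fin m))
        (fun Q => ((remaining (extendProfile n Q) k i).card : ℝ)) (m - D) fun Q _ => by
          have h : (m : ℝ) ≤ ((remaining (extendProfile n Q) k i).card : ℝ) + D := by
            rw [hD]
            exact_mod_cast le_card_remaining (extendProfile n Q) k i
          linarith
      rwa [nsmul_eq_mul, Finset.card_univ] at this
    rw [← mul_sum_available k i r] at hcard
    refine le_of_mul_le_mul_left (le_trans (le_of_eq ?_) hcard) hm'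
    field_simp
  have hsum : ∑ r : Fin m, (if (r : ℕ) < L then lexScore m ((r : ℕ) + 1) else 0) =
      2 ^ m - 2 ^ (m - L) := by
    rw [Fin.sum_univ_eq_sum_range fun r => if r < L then lexScore m (r + 1) else 0,
      ← Finset.sum_filter, ← sum_lexScore hLm]
    refine Finset.sum_congr ?_ fun _ _ => rfl
    ext r
    simp only [Finset.mem_filter, Finset.mem_range]
    omega
  rw [EUFI, le_div_iff₀ hNpos]
  calc _ = ∑ r : Fin m, (if (r : ℕ) < L then lexScore m ((r : ℕ) + 1) else 0) *
        ((1 - D / m) * N) := by rw [← Finset.sum_mul, hsum, mul_assoc]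
    _ ≤ ∑ r : Fin m, (if (r : ℕ) < L then lexScore m ((r : ℕ) + 1) else 0) *
        ∑ Q : Fin n → Fin m ≃ Fin m,
          (if extendProfile n Q i r ∈ remaining (extendProfile n Q) k i then (1 : ℝ) else 0) := by
        refine Finset.sum_le_sum fun r _ => mul_le_mul_of_nonneg_left (havail r) ?_
        split_ifs
        exacts [lexScore_nonneg _ _, le_rfl]
    _ = ∑ Q : Fin n → Fin m ≃ Fin m, ∑ r : Fin m,
        (if (r : ℕ) < L then lexScore m ((r : ℕ) + 1) else 0) *
          (if extendProfile n Q i r ∈ remaining (extendProfile n Q) k i then (1 : ℝ) else 0) := by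
        simp_rw [Finset.mul_sum]
        exact Finset.sum_comm
    _ ≤ _ := Finset.sum_le_sum fun Q _ => le_util (lexScore_nonneg m) _ k hL

/-- Letting all agents but the last pick a fixed number of items gives every agent nearly
the maximal utility `2 ^ m`. -/
theorem exists_EUFI_ge (n : ℕ) (hn : 0 < n) {δ : ℝ} (hδ : 0 < δ) :
    ∃ M : ℕ, ∀ m : ℕ, M ≤ m → ∃ k : ℕ → ℕ, ∑ i ∈ Finset.range n, k i = m ∧
      ∀ i < n, (1 - δ) * 2 ^ m ≤ EUFI n m (lexScore m) k i := by
  obtain ⟨L, hL⟩ := exists_pow_lt_of_lt_one (half_pos hδ) (by norm_num : (1 / 2 : ℝ) < 1)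
  obtain ⟨B, hB⟩ := exists_nat_gt (n * L / (δ / 2))
  refine ⟨max B (n * L + 1), fun m hm => ?_⟩
  have hBm : B ≤ m := (le_max_left _ _).trans hm
  have hnLm : n * L + 1 ≤ m := (le_max_right _ _).trans hm
  have hm0 : 0 < m := by omega
  have hm' : (0 : ℝ) < m := by exact_mod_cast hm0
  obtain ⟨p, rfl⟩ : ∃ p, n = p + 1 := ⟨n - 1, by omega⟩
  have hexp : (p + 1) * L = p * L + L := by ring
  refine ⟨fun j => if j < p then L else m - p * L, ?_, fun i hi => ?_⟩
  · rw [Finset.sum_range_succ,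
      Finset.sum_congr rfl fun j hj => if_pos (Finset.mem_range.mp hj)]
    simp
    omega
  have hLm : L ≤ m := by omega
  have hbound := le_EUFI hm0 hLm (fun j => if j < p then L else m - p * L) ⟨i, hi⟩ (by
    dsimp only
    split_ifs <;> omega)
  refine le_trans ?_ hbound
  have hpicked : ∑ j ∈ Finset.range i, (if j < p then L else m - p * L) = i * L := by
    rw [Finset.sum_congr rfl fun j hj => if_pos (by have := Finset.mem_range.mp hj; omega)]
    simp
  have hD : ((i * L : ℕ) : ℝ) / m ≤ δ / 2 := by
    rw [div_lt_iff₀ (half_pos hδ)] at hB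
    rw [div_le_iff₀ hm']
    have h1 : ((i * L : ℕ) : ℝ) ≤ ((p + 1 : ℕ) : ℝ) * L := by
      exact_mod_cast Nat.mul_le_mul_right L hi.le
    have h2 : (B : ℝ) * (δ / 2) ≤ m * (δ / 2) := by gcongr
    linarith
  have hD0 : 0 ≤ ((i * L : ℕ) : ℝ) / m := by positivity
  have hpow : (2 : ℝ) ^ (m - L) = 2 ^ m * (1 / 2) ^ L := by
    rw [pow_sub₀ _ two_ne_zero hLm]
    simp
  simp only [hpicked]
  rw [hpow]
  have hpos : (0 : ℝ) < 2 ^ m := by positivity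
  have hhalf : (0 : ℝ) ≤ (1 / 2) ^ L := by positivity
  calc (1 - δ) * 2 ^ m ≤ ((1 - (1 / 2) ^ L) * (1 - ((i * L : ℕ) : ℝ) / m)) * 2 ^ m := by
        gcongr
        nlinarith [mul_nonneg hhalf hD0]
    _ = _ := by ring

/-- Fix `n ≥ 1` agents and consider the full independence model with the lexicographic
scoring vector `s_j = 2^(m-j)`.  For every `ε > 0` there is `M` such that for all `m ≥ M`
and ALL vectors `k` maximizing the egalitarian welfare `min_a EU^k(a)` among the vectors of
nonnegative integers summing to `m`, the relative spread
`(max_a EU^k(a) - min_a EU^k(a)) / (∑_a EU^k(a))` is below `ε`. -/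
theorem lex_egalitarian_optima_equalize (n : ℕ) (hn : 0 < n) :
    ∀ ε : ℝ, 0 < ε → ∃ M : ℕ, ∀ m : ℕ, M ≤ m →
      ∀ k : ℕ → ℕ, (∑ i ∈ Finset.range n, k i = m) →
        (∀ k' : ℕ → ℕ, (∑ i ∈ Finset.range n, k' i = m) →
          (Finset.range n).inf' (Finset.nonempty_range_iff.mpr hn.ne')
              (EUFI n m (lexScore m) k') ≤
            (Finset.range n).inf' (Finset.nonempty_range_iff.mpr hn.ne')
              (EUFI n m (lexScore m) k)) →
        ((Finset.range n).sup' (Finset.nonempty_range_iff.mpr hn.ne')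
              (EUFI n m (lexScore m) k) -
            (Finset.range n).inf' (Finset.nonempty_range_iff.mpr hn.ne')
              (EUFI n m (lexScore m) k)) /
          (∑ i ∈ Finset.range n, EUFI n m (lexScore m) k i) < ε := by
  intro ε hε
  set δ : ℝ := ε / (2 * (1 + ε)) with hδ
  have hδ0 : 0 < δ := by positivity
  obtain ⟨M, hM⟩ := exists_EUFI_ge n hn hδ0
  refine ⟨M, fun m hm k _ hopt => ?_⟩
  obtain ⟨k', hk', hlow⟩ := hM m hm
  have hne := Finset.nonempty_range_iff.mpr hn.ne'
  have hpos : (0 : ℝ) < 2 ^ m := by positivity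
  have hmin : (1 - δ) * 2 ^ m ≤
      (Finset.range n).inf' hne (EUFI n m (lexScore m) k) :=
    (Finset.le_inf' hne _ fun i hi => hlow i (Finset.mem_range.mp hi)).trans (hopt k' hk')
  have hmax : (Finset.range n).sup' hne (EUFI n m (lexScore m) k) ≤ 2 ^ m :=
    Finset.sup'_le hne _ fun i _ => EUFI_lexScore_le n m k i
  have hlt : δ < ε * (1 - δ) := by
    rw [hδ]
    field_simp
    nlinarith
  have h1δ : 0 < 1 - δ := pos_of_mul_pos_right (hδ0.trans hlt) hε.le
  have hbase : 0 < (1 - δ) * 2 ^ m := mul_pos h1δ hpos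
  have hall : ∀ i ∈ Finset.range n, (1 - δ) * 2 ^ m ≤ EUFI n m (lexScore m) k i :=
    fun i hi => hmin.trans (Finset.inf'_le _ hi)
  have hsum : (1 - δ) * 2 ^ m ≤ ∑ i ∈ Finset.range n, EUFI n m (lexScore m) k i :=
    (hall 0 (Finset.mem_range.mpr hn)).trans
      (Finset.single_le_sum (fun i hi => hbase.le.trans (hall i hi)) (Finset.mem_range.mpr hn))
  rw [div_lt_iff₀ (hbase.trans_le hsum)]
  calc _ ≤ δ * 2 ^ m := by linarith
    _ < ε * (1 - δ) * 2 ^ m := by gcongr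
    _ ≤ _ := by rw [mul_assoc]; gcongr
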